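/- arXiv:2004.02370 — 3 statements merged into one kernel-verified Lean document; each statement's English description precedes it below -/
import Mathlib

section
/- Let the true grid be a tree on buses {0,1,…,N} with reduced incidence matrix A₀ and positive conductance vector g₀, set G₀ := A₀ᵀ diag(g₀) A₀, and let C ⊆ {1,…,N} contain all leaf buses of this tree. Let Δ ∈ ℝ^{|C|×T} satisfy rank(Δ) = |C|, and let V := G₀⁻¹ I_C Δ ∈ ℝ^{N×T} be the noiseless probing voltage data. Then for any reduced incidence matrix A of any spanning tree on the bus set {0,1,…,N}, the matrix H := (VᵀAᵀ) ∗ (Aᵀ) ∈ ℝ^{NT×N} has full column rank N. -/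
/-!
A kernel vector `x` of `H` satisfies `Aᵀ diag(x) A V = 0`. The reduced incidence matrix of a tree is
invertible, so `diag(x) (A V) = 0`, and it suffices that no row of `A V` vanishes.

Let row `ℓ`, for a line with endpoints `a ≠ b`, vanish. Since `Δ` has independent rows, the
potential `w` solving `G₀ w = e_a - e_b` (extended by `0` to the substation) vanishes on `C`, hence at
every degree-one bus of the true tree. Tested against an arbitrary `χ` on all buses, the equation
reads `∑ g₀ (δχ) (δw) = χ a - χ b`, where `δ` is the difference along a line
(`RadialGrid.testing_identity`).

* Taking for `χ` the indicator of one side of the cut made by a line shows that `w` does not drop on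
  a line whose removal leaves `a` and `b` connected (`RadialGrid.drop_eq_zero`).
* A longest path from `b` through `a` ends at a degree-one bus (`exists_path_to_degree_one`), and `w`
  is constant on it beyond `a`, so `w a = 0`. By symmetry `w b = 0`
  (`RadialGrid.exists_degree_one_eq`).
* Taking `χ = w` gives zero energy, so `δw = 0` and `χ a = χ b` for every `χ`, which is absurd.
-/

open Matrix BigOperators
open scoped Classical

/-- A radial grid: a tree on buses `{0,…,N}` with `N` lines, each line `ℓ`
having an ordered pair of endpoints (the first carrying `+1` in the incidence
matrix, the second `−1`). -/
structure RadialGrid (N : ℕ) where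
  ep : Fin N → Fin (N + 1) × Fin (N + 1)
  ne : ∀ ℓ, (ep ℓ).1 ≠ (ep ℓ).2
  inj : Function.Injective fun ℓ => s((ep ℓ).1, (ep ℓ).2)
  tree : (SimpleGraph.fromEdgeSet (Set.range fun ℓ => s((ep ℓ).1, (ep ℓ).2))).IsTree

namespace RadialGrid

variable {N : ℕ}

/-- The underlying tree graph. -/
def graph (T : RadialGrid N) : SimpleGraph (Fin (N + 1)) :=
  SimpleGraph.fromEdgeSet (Set.range fun ℓ => s((T.ep ℓ).1, (T.ep ℓ).2))

/-- A leaf bus: a non-substation bus of tree-degree one. -/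
noncomputable def isLeaf (T : RadialGrid N) (n : Fin (N + 1)) : Prop :=
  n ≠ 0 ∧ (T.graph.neighborSet n).ncard = 1

/-- The feeding path of bus `n`: the unique path from the substation `0` to `n`. -/
noncomputable def fpath (T : RadialGrid N) (n : Fin (N + 1)) : T.graph.Walk 0 n :=
  (T.tree.existsUnique_path 0 n).choose

/-- Line `ℓ` lies on the feeding path of bus `n`. -/
def onPath (T : RadialGrid N) (ℓ : Fin N) (n : Fin (N + 1)) : Prop :=
  s((T.ep ℓ).1, (T.ep ℓ).2) ∈ (T.fpath n).edges

/-- Bus `a` is an ancestor of bus `n`: `a` lies on the feeding path of `n`, `a ≠ n`. -/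
def ancestor (T : RadialGrid N) (a n : Fin (N + 1)) : Prop :=
  a ∈ (T.fpath n).support ∧ a ≠ n

/-- `R_{ab}` for buses `a b`: sum of resistances of lines on the intersection of
the feeding paths of `a` and `b`. -/
noncomputable def Rbus (T : RadialGrid N) (r : Fin N → ℝ) (a b : Fin (N + 1)) : ℝ :=
  ∑ ℓ : Fin N, if T.onPath ℓ a ∧ T.onPath ℓ b then r ℓ else 0

/-- The resistance matrix `R` on the non-substation buses `{1,…,N}`. -/
noncomputable def R (T : RadialGrid N) (r : Fin N → ℝ) (m n : Fin N) : ℝ :=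
  T.Rbus r m.succ n.succ

/-- The reduced incidence matrix `A` (substation column deleted): row `ℓ` has `+1`
at the first endpoint of line `ℓ` and `−1` at the second. -/
def A (T : RadialGrid N) : Matrix (Fin N) (Fin N) ℝ := fun ℓ i =>
  if i.succ = (T.ep ℓ).1 then 1 else if i.succ = (T.ep ℓ).2 then -1 else 0

/-- `G := Aᵀ diag(g) A` for a conductance vector `g`. -/
noncomputable def Gmat (T : RadialGrid N) (g : Fin N → ℝ) : Matrix (Fin N) (Fin N) ℝ :=
  T.Aᵀ * Matrix.diagonal g * T.A

end RadialGrid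

/-- `I_C`: the `N × |C|` matrix collecting the columns of the identity indexed by `C`. -/
def IC {N : ℕ} (C : Finset (Fin N)) : Matrix (Fin N) ↥C ℝ := fun n c =>
  if n = (c : Fin N) then 1 else 0

/-- The Khatri-Rao (column-wise Kronecker) product. -/
def khatriRao {m n L : Type*} (Z : Matrix m L ℝ) (X : Matrix n L ℝ) :
    Matrix (m × n) L ℝ := fun p ℓ => Z p.1 ℓ * X p.2 ℓ

/-- Column-stacking vectorization: entry `(t,i)` of `vec P` is `P i t`. -/
def vec {n t : Type*} (P : Matrix n t ℝ) : t × n → ℝ := fun p => P p.2 p.1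

/-! ### Tree paths -/

/-- In a finite tree, some path from `b` through `a ≠ b` ends at a vertex of degree one: a longest
such path does. -/
theorem exists_path_to_degree_one {V : Type*} [Fintype V] {G : SimpleGraph V} (hG : G.IsTree)
    {a b : V} (hab : a ≠ b) :
    ∃ (x : V) (p : G.Walk b x), p.IsPath ∧ a ∈ p.support ∧ (G.neighborSet x).ncard = 1 := by
  let S : Set ℕ := {n | ∃ (x : V) (p : G.Walk b x), p.IsPath ∧ a ∈ p.support ∧ p.length = n}
  have hfin : S.Finite := by
    refine (Set.finite_lt_nat (Fintype.card V)).subset ?_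
    rintro n ⟨x, p, hp, -, rfl⟩
    exact hp.length_lt
  have hne : S.Nonempty := by
    obtain ⟨p, hp, -⟩ := hG.existsUnique_path b a
    exact ⟨_, a, p, hp, p.end_mem_support, rfl⟩
  obtain ⟨n, ⟨x, p, hp, hap, rfl⟩, hmax⟩ := hfin.exists_maximal hne
  refine ⟨x, p, hp, hap, ?_⟩
  have hnil : ¬ p.Nil := by
    intro h
    rw [SimpleGraph.Walk.nil_iff_support_eq] at h
    rw [h] at hap
    simp at hap
    exact hab hap
  rw [Set.ncard_eq_one]
  refine ⟨p.penultimate, ?_⟩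
  ext y
  simp only [SimpleGraph.mem_neighborSet, Set.mem_singleton_iff]
  constructor
  · intro hxy
    by_cases hy : y ∈ p.support
    · -- The initial segment up to `y`, prolonged by the edge to `x`, is the path `p` itself.
      have hxn : x ∉ (p.takeUntil y hy).support :=
        SimpleGraph.Walk.endpoint_notMem_support_takeUntil hp hy hxy.ne
      have hq : ((p.takeUntil y hy).concat hxy.symm).IsPath :=
        (hp.takeUntil hy).concat hxn hxy.symm
      have heq := (hG.isAcyclic.subsingleton_path b x).elim ⟨_, hq⟩ ⟨p, hp⟩
      have heq' : (p.takeUntil y hy).concat hxy.symm = p := congrArg Subtype.val heq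
      rw [← heq']
      simp
    · exfalso
      have hmem : (p.concat hxy).length ∈ S :=
        ⟨y, p.concat hxy, hp.concat hy hxy, by simp [SimpleGraph.Walk.support_concat, hap], rfl⟩
      have := hmax hmem (by simp)
      simp at this
  · rintro rfl
    exact (p.adj_penultimate hnil).symm

/-! ### Potentials on a radial grid -/

namespace RadialGrid

variable {N : ℕ}

/-- Extension of a potential on `{1,…,N}` to all buses by the value `0` at the substation. -/
def ext0 (w : Fin N → ℝ) : Fin (N + 1) → ℝ := Fin.cons 0 w

/-- The difference of a bus potential along line `ℓ`. -/
def drop (Γ : RadialGrid N) (f : Fin (N + 1) → ℝ) (ℓ : Fin N) : ℝ :=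
  f (Γ.ep ℓ).1 - f (Γ.ep ℓ).2

theorem A_dot (Γ : RadialGrid N) (w : Fin N → ℝ) (ℓ : Fin N) :
    ∑ i, Γ.A ℓ i * w i = Γ.drop (ext0 w) ℓ := by
  have key : ∀ c : Fin (N + 1), ∑ i : Fin N, (if i.succ = c then w i else 0) = ext0 w c := by
    intro c
    refine Fin.cases ?_ (fun j => ?_) c
    · simp [ext0, Fin.succ_ne_zero]
    · simp [ext0]
  rw [drop, ← key, ← key, ← Finset.sum_sub_distrib]
  refine Finset.sum_congr rfl fun i _ => ?_
  have := Γ.ne ℓ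
  unfold A
  split_ifs with h1 h2
  · exact absurd (h1.symm.trans h2) this
  all_goals simp

theorem adj_iff (Γ : RadialGrid N) {u v : Fin (N + 1)} :
    Γ.graph.Adj u v ↔ ∃ ℓ, s((Γ.ep ℓ).1, (Γ.ep ℓ).2) = s(u, v) := by
  unfold graph
  rw [SimpleGraph.fromEdgeSet_adj]
  constructor
  · rintro ⟨⟨ℓ, h⟩, -⟩
    exact ⟨ℓ, h⟩
  · rintro ⟨ℓ, h⟩
    refine ⟨⟨ℓ, h⟩, ?_⟩
    rintro rfl
    have := Γ.ne ℓ
    simp only [Sym2.eq_iff] at h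
    rcases h with h | h <;> exact this (h.1.trans h.2.symm)

theorem isTree (Γ : RadialGrid N) : Γ.graph.IsTree := Γ.tree

theorem eq_of_drop {Γ : RadialGrid N} {f : Fin (N + 1) → ℝ} {ℓ : Fin N} (h : Γ.drop f ℓ = 0)
    {u v : Fin (N + 1)} (huv : s((Γ.ep ℓ).1, (Γ.ep ℓ).2) = s(u, v)) : f u = f v := by
  unfold drop at h
  rw [Sym2.eq_iff] at huv
  rcases huv with ⟨h1, h2⟩ | ⟨h1, h2⟩ <;> rw [h1, h2] at h <;> linarith

theorem isUnit_A (Γ : RadialGrid N) : IsUnit Γ.A := by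
  rw [← Matrix.mulVec_injective_iff_isUnit]
  refine (injective_iff_map_eq_zero (Matrix.mulVecLin Γ.A)).2 fun w hw => ?_
  have hd : ∀ ℓ, Γ.drop (ext0 w) ℓ = 0 := fun ℓ => by
    rw [← A_dot]
    exact congrFun hw ℓ
  have hwalk : ∀ u v : Fin (N + 1), Γ.graph.Walk u v → ext0 w u = ext0 w v := by
    intro u v p
    induction p with
    | nil => rfl
    | cons h _ ih =>
      obtain ⟨ℓ, hℓ⟩ := Γ.adj_iff.1 h
      exact (eq_of_drop (hd ℓ) hℓ).trans ih
  funext i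
  obtain ⟨p⟩ := Γ.isTree.connected.preconnected 0 i.succ
  simpa [ext0] using (hwalk _ _ p).symm

theorem isUnit_Gmat (Γ : RadialGrid N) {g : Fin N → ℝ} (hg : ∀ ℓ, 0 < g ℓ) :
    IsUnit (Γ.Gmat g) := by
  have hD : IsUnit (Matrix.diagonal g) := by
    rw [Matrix.isUnit_iff_isUnit_det, Matrix.det_diagonal, isUnit_iff_ne_zero]
    exact Finset.prod_ne_zero_iff.2 fun ℓ _ => (hg ℓ).ne'
  exact (((Matrix.isUnit_transpose _).2 Γ.isUnit_A).mul hD).mul Γ.isUnit_A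

/-- The weak form of `G w = e_a - e_b`, where `(a, b)` are the endpoints of line `ℓ` of a second
grid `Γ'`. The test function need not vanish at the substation: both sides only see differences. -/
theorem testing_identity (Γ Γ' : RadialGrid N) (g : Fin N → ℝ) (ℓ : Fin N) (w : Fin N → ℝ)
    (hw : w ᵥ* Γ.Gmat g = Γ'.A ℓ) (χ : Fin (N + 1) → ℝ) :
    ∑ k, g k * (Γ.drop χ k * Γ.drop (ext0 w) k) = χ (Γ'.ep ℓ).1 - χ (Γ'.ep ℓ).2 := by
  let z : Fin N → ℝ := fun i => χ i.succ - χ 0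
  have hz : ∀ c, ext0 z c = χ c - χ 0 := by
    intro c
    refine Fin.cases ?_ (fun j => ?_) c
    · simp [ext0]
    · simp [ext0, z]
  have hdz : ∀ (Γ'' : RadialGrid N) k, Γ''.drop (ext0 z) k = Γ''.drop χ k := fun Γ'' k => by
    simp [drop, hz]
  have hR : (w ᵥ* Γ.Gmat g) ⬝ᵥ z = Γ'.drop χ ℓ := by
    rw [hw, ← hdz, ← A_dot]
    rfl
  have hAw : Γ.A *ᵥ w = Γ.drop (ext0 w) := funext fun k => Γ.A_dot w k
  have hAz : Γ.A *ᵥ z = Γ.drop χ := funext fun k => (Γ.A_dot z k).trans (hdz Γ k)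
  have hL : (w ᵥ* Γ.Gmat g) ⬝ᵥ z = ∑ k, g k * (Γ.drop χ k * Γ.drop (ext0 w) k) := by
    rw [Gmat, ← Matrix.vecMul_vecMul, ← Matrix.dotProduct_mulVec, hAz, ← Matrix.vecMul_vecMul,
      Matrix.vecMul_transpose, hAw]
    simp only [dotProduct, Matrix.vecMul_diagonal]
    exact Finset.sum_congr rfl fun k _ => by ring
  rw [← hL, hR]
  rfl

/-- The current on a line vanishes if unit current is injected at `a` and extracted at `b`, and the
line does not separate `a` from `b`. -/
theorem drop_eq_zero (Γ : RadialGrid N) {g : Fin N → ℝ} (hg : ∀ ℓ, 0 < g ℓ)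
    {f : Fin (N + 1) → ℝ} {a b : Fin (N + 1)}
    (hf : ∀ χ : Fin (N + 1) → ℝ, ∑ k, g k * (Γ.drop χ k * Γ.drop f k) = χ a - χ b)
    (ℓ : Fin N)
    (hreach : (Γ.graph.deleteEdges {s((Γ.ep ℓ).1, (Γ.ep ℓ).2)}).Reachable a b) :
    Γ.drop f ℓ = 0 := by
  set G' := Γ.graph.deleteEdges {s((Γ.ep ℓ).1, (Γ.ep ℓ).2)} with hGdel
  -- The indicator of the side of the cut containing the first endpoint.
  let χ : Fin (N + 1) → ℝ := fun x => if G'.Reachable (Γ.ep ℓ).1 x then 1 else 0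
  have hχ : ∀ x y, G'.Reachable x y → χ x = χ y := by
    intro x y h
    have : G'.Reachable (Γ.ep ℓ).1 x ↔ G'.Reachable (Γ.ep ℓ).1 y :=
      ⟨fun h' => h'.trans h, fun h' => h'.trans h.symm⟩
    simp only [χ, this]
  have hbridge : ¬ G'.Reachable (Γ.ep ℓ).1 (Γ.ep ℓ).2 :=
    SimpleGraph.isBridge_iff.1 (SimpleGraph.isAcyclic_iff_forall_isBridge.1 Γ.isTree.isAcyclic
      (Γ.adj_iff.2 ⟨ℓ, rfl⟩))
  have hother : ∀ k, k ≠ ℓ → Γ.drop χ k = 0 := by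
    intro k hk
    refine sub_eq_zero.2 (hχ _ _ (SimpleGraph.Adj.reachable ?_))
    rw [hGdel, SimpleGraph.deleteEdges_adj]
    exact ⟨Γ.adj_iff.2 ⟨k, rfl⟩, fun h => hk (Γ.inj h)⟩
  have hself : Γ.drop χ ℓ = 1 := by
    simp [drop, χ, hbridge]
  have h := hf χ
  rw [hχ a b hreach, sub_self, Finset.sum_eq_single ℓ (fun k _ hk => by simp [hother k hk])
    (by simp), hself, one_mul] at h
  exact (mul_eq_zero.1 h).resolve_left (ne_of_gt (hg ℓ))

/-- The potential at `a` is attained at a bus of degree one, on the far side of `a` from `b`. -/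
theorem exists_degree_one_eq (Γ : RadialGrid N) {f : Fin (N + 1) → ℝ} {a b : Fin (N + 1)}
    (hab : a ≠ b)
    (hf : ∀ ℓ, (Γ.graph.deleteEdges {s((Γ.ep ℓ).1, (Γ.ep ℓ).2)}).Reachable a b →
      Γ.drop f ℓ = 0) :
    ∃ x, (Γ.graph.neighborSet x).ncard = 1 ∧ f a = f x := by
  obtain ⟨x, p, hp, hap, hx⟩ := exists_path_to_degree_one Γ.isTree hab
  refine ⟨x, hx, ?_⟩
  have hdisj := hp.isTrail.disjoint_edges_takeUntil_dropUntil hap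
  have hwalk : ∀ u v (q : Γ.graph.Walk u v),
      (∀ e ∈ q.edges, e ∉ (p.takeUntil a hap).edges) → f u = f v := by
    intro u v q
    induction q with
    | nil => intro _; rfl
    | cons h q ih =>
      intro hq
      obtain ⟨ℓ, hℓ⟩ := Γ.adj_iff.1 h
      refine (eq_of_drop (hf ℓ ?_) hℓ).trans (ih fun e he => hq e (by simp [he]))
      rw [hℓ]
      refine SimpleGraph.Reachable.symm ?_
      rw [SimpleGraph.reachable_deleteEdges_iff_exists_walk]
      exact ⟨p.takeUntil a hap, hq _ (by simp)⟩
  exact hwalk _ _ (p.dropUntil a hap) fun e he hmem => hdisj hmem he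

/-- A potential driven by a dipole on two distinct buses cannot vanish at all degree-one buses. -/
theorem dipole_false (Γ : RadialGrid N) {g : Fin N → ℝ} (hg : ∀ ℓ, 0 < g ℓ)
    {f : Fin (N + 1) → ℝ} {a b : Fin (N + 1)} (hab : a ≠ b)
    (hf : ∀ χ : Fin (N + 1) → ℝ, ∑ k, g k * (Γ.drop χ k * Γ.drop f k) = χ a - χ b)
    (h0 : ∀ x, (Γ.graph.neighborSet x).ncard = 1 → f x = 0) : False := by
  have hd := fun ℓ => Γ.drop_eq_zero hg hf ℓ
  have ha : f a = 0 := by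
    obtain ⟨x, hx, h⟩ := Γ.exists_degree_one_eq hab hd
    rw [h, h0 x hx]
  have hb : f b = 0 := by
    obtain ⟨x, hx, h⟩ := Γ.exists_degree_one_eq hab.symm fun ℓ h => hd ℓ h.symm
    rw [h, h0 x hx]
  have hE := hf f
  rw [ha, hb, sub_self, Finset.sum_eq_zero_iff_of_nonneg
    fun k _ => mul_nonneg (hg k).le (mul_self_nonneg _)] at hE
  have hzero : ∀ k, Γ.drop f k = 0 := fun k =>
    mul_self_eq_zero.1 ((mul_eq_zero.1 (hE k (Finset.mem_univ k))).resolve_left (hg k).ne')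
  have h1 := hf (Pi.single a 1)
  simp [hzero, hab.symm] at h1

end RadialGrid

/-! ### Rank -/

theorem eq_zero_of_vecMul_eq_zero_of_rank {m n : Type*} [Fintype m] [Fintype n]
    (M : Matrix m n ℝ) (hM : M.rank = Fintype.card m) {y : m → ℝ} (hy : y ᵥ* M = 0) : y = 0 := by
  have hli : LinearIndependent ℝ M.row := by
    rw [linearIndependent_iff_card_eq_finrank_span, ← hM, M.rank_eq_finrank_span_row]
    rfl
  rw [← Matrix.vecMul_injective_iff] at hli
  exact hli (by simpa using hy)

/-- No row of `A V` vanishes. -/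
theorem row_ne_zero {N T : ℕ} (Γ₀ : RadialGrid N) (g₀ : Fin N → ℝ) (hg₀ : ∀ ℓ, 0 < g₀ ℓ)
    (C : Finset (Fin N)) (hleaf : ∀ n : Fin N, Γ₀.isLeaf n.succ → n ∈ C)
    (Δ : Matrix ↥C (Fin T) ℝ) (hΔ : Δ.rank = C.card) (Γ : RadialGrid N) (ℓ : Fin N) :
    Γ.A ℓ ᵥ* ((Γ₀.Gmat g₀)⁻¹ * IC C * Δ) ≠ 0 := by
  intro h
  set w := Γ.A ℓ ᵥ* (Γ₀.Gmat g₀)⁻¹ with hwdef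
  rw [← Matrix.vecMul_vecMul, ← Matrix.vecMul_vecMul, ← hwdef] at h
  have hwC := eq_zero_of_vecMul_eq_zero_of_rank Δ (by simpa using hΔ) h
  have hC : ∀ n ∈ C, w n = 0 := by
    intro n hn
    have := congrFun hwC ⟨n, hn⟩
    simpa [Matrix.vecMul, dotProduct, IC] using this
  have hw : w ᵥ* Γ₀.Gmat g₀ = Γ.A ℓ := by
    rw [hwdef, Matrix.vecMul_vecMul, Matrix.nonsing_inv_mul _
      ((Matrix.isUnit_iff_isUnit_det _).1 (Γ₀.isUnit_Gmat hg₀)), Matrix.vecMul_one]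
  refine Γ₀.dipole_false hg₀ (Γ.ne ℓ) (Γ₀.testing_identity Γ g₀ ℓ w hw) fun x => ?_
  refine Fin.cases ?_ (fun n => ?_) x
  · intro _
    rfl
  · intro hn
    exact hC n (hleaf n ⟨Fin.succ_ne_zero n, hn⟩)

/-- With noiseless probing voltage data `V = G₀⁻¹ I_C Δ` (all leaves
probed, `Δ` full row rank), for any reduced incidence matrix `A` of any spanning tree,
the matrix `H = (VᵀAᵀ) ∗ (Aᵀ)` has full column rank `N`. -/
theorem H_full_column_rank
    {N T : ℕ} (hN : 1 ≤ N) (Γ₀ : RadialGrid N) (g₀ : Fin N → ℝ) (hg₀ : ∀ ℓ, 0 < g₀ ℓ)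
    (C : Finset (Fin N)) (hleaf : ∀ n : Fin N, Γ₀.isLeaf n.succ → n ∈ C)
    (Δ : Matrix ↥C (Fin T) ℝ) (hΔ : Δ.rank = C.card)
    (Γ : RadialGrid N) :
    (khatriRao (((Γ₀.Gmat g₀)⁻¹ * IC C * Δ)ᵀ * Γ.Aᵀ) Γ.Aᵀ).rank = N := by
  set V := (Γ₀.Gmat g₀)⁻¹ * IC C * Δ with hV
  have hli : LinearIndependent ℝ (khatriRao (Vᵀ * Γ.Aᵀ) Γ.Aᵀ).col := by
    rw [← Matrix.mulVec_injective_iff]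
    refine (injective_iff_map_eq_zero (Matrix.mulVecLin _)).2 fun x hx => ?_
    have hAT : Function.Injective Γ.Aᵀ.mulVec :=
      Matrix.mulVec_injective_iff_isUnit.2 ((Matrix.isUnit_transpose _).2 Γ.isUnit_A)
    have hzero : ∀ t ℓ, (Vᵀ * Γ.Aᵀ) t ℓ * x ℓ = 0 := by
      intro t
      have : Γ.Aᵀ *ᵥ (fun ℓ => (Vᵀ * Γ.Aᵀ) t ℓ * x ℓ) = Γ.Aᵀ *ᵥ 0 := by
        rw [Matrix.mulVec_zero]
        funext i
        have h : ∑ ℓ, khatriRao (Vᵀ * Γ.Aᵀ) Γ.Aᵀ (t, i) ℓ * x ℓ = 0 := congrFun hx (t, i)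
        change ∑ ℓ, Γ.Aᵀ i ℓ * ((Vᵀ * Γ.Aᵀ) t ℓ * x ℓ) = 0
        rw [← h]
        refine Finset.sum_congr rfl fun ℓ _ => ?_
        simp only [khatriRao]
        ring
      exact fun ℓ => congrFun (hAT this) ℓ
    funext ℓ
    by_contra hxl
    refine row_ne_zero Γ₀ g₀ hg₀ C hleaf Δ hΔ Γ ℓ ?_
    rw [← hV]
    funext t
    have h := (mul_eq_zero.1 (hzero t ℓ)).resolve_right hxl
    rw [← Matrix.transpose_mul] at h
    exact h
  rw [← Matrix.rank_transpose]
  simpa using LinearIndependent.rank_matrix (M := (khatriRao (Vᵀ * Γ.Aᵀ) Γ.Aᵀ)ᵀ) hli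
end

section
/- Let α > 0, let H̄ ∈ ℝ^{M×L̄} and p ∈ ℝ^{M}, and let S ∈ {0,1}^{N×L̄} be a selection matrix with pairwise distinct rows, so that S Sᵀ = I_N and SᵀS = diag(b) for the 0/1 indicator vector b of selected columns. Set H := H̄ Sᵀ, C := (α⁻¹ H̄ᵀH̄ + I_{L̄})⁻¹, and p̄ := H̄ᵀp. If C − diag(b) is invertible, then the least-squares objective f := −pᵀH(HᵀH)⁻¹Hᵀp satisfies α f = p̄ᵀ[ diag(b) + diag(b) (C − diag(b))⁻¹ diag(b) ] p̄. -/
/-!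
Write `G = H̄ᵀH̄`, `K = α⁻¹ G + 1 = C⁻¹`, `Y = (C - SᵀS)⁻¹`. Since `S Sᵀ = 1`, one has
`HᵀH = S G Sᵀ` and `-α⁻¹ HᵀH = 1 - S K Sᵀ`. From `K (C - SᵀS) Y = K` one gets
`K SᵀS Y = Y - K`, and therefore `(1 - S K Sᵀ) (1 + S Y Sᵀ) = 1`. Hence `HᵀH` is invertible with
`(HᵀH)⁻¹ = -α⁻¹ (1 + S Y Sᵀ)` (`inv_compressed_gram`); conjugating by `S` and using
`SᵀS = diag b` gives the claim.
-/

open Matrix BigOperators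
open scoped Classical

/-- Distinct rows of a selection matrix select distinct columns, hence are orthonormal. -/
theorem selection_mul_transpose {N L : ℕ} (S : Matrix (Fin N) (Fin L) ℝ)
    (hS01 : ∀ i j, S i j = 0 ∨ S i j = 1)
    (hSrow : ∀ i, ∃! j, S i j = 1)
    (hSdist : Function.Injective fun i => S i) : S * Sᵀ = 1 := by
  choose c hc hcu using hSrow
  have hS : ∀ i j, S i j = if j = c i then 1 else 0 := by
    intro i j
    split_ifs with h
    · rw [h]; exact hc i
    · exact (hS01 i j).resolve_right fun h1 => h (hcu i j h1)
  have hcinj : Function.Injective c := by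
    intro i k hik
    apply hSdist
    funext j
    simp only [hS, hik]
  ext i k
  simp [Matrix.mul_apply, hS, Matrix.one_apply, hcinj.eq_iff, eq_comm]

theorem isUnit_det_smul_gram_add_one {M L : ℕ} {α : ℝ} (hα : 0 < α)
    (Hb : Matrix (Fin M) (Fin L) ℝ) :
    IsUnit (α⁻¹ • (Hbᵀ * Hb) + 1 : Matrix (Fin L) (Fin L) ℝ).det := by
  have h1 : (Hbᵀ * Hb).PosSemidef := by
    simpa [Matrix.conjTranspose_eq_transpose_of_trivial] using
      Matrix.posSemidef_conjTranspose_mul_self Hb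
  have h2 := Matrix.PosDef.posSemidef_add (h1.smul (inv_nonneg.2 hα.le))
    (Matrix.PosDef.one (n := Fin L) (R := ℝ))
  exact (Matrix.isUnit_iff_isUnit_det _).1 h2.isUnit

/-- The Woodbury-type identity `(S G Sᵀ)⁻¹ = -α⁻¹ (1 + S (C - SᵀS)⁻¹ Sᵀ)` with
`C = (α⁻¹ G + 1)⁻¹`; in particular `S G Sᵀ` is invertible. -/
theorem inv_compressed_gram {N L : ℕ} {α : ℝ}
    (G : Matrix (Fin L) (Fin L) ℝ) (S : Matrix (Fin N) (Fin L) ℝ) (hSS : S * Sᵀ = 1)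
    (hK : IsUnit (α⁻¹ • G + 1).det) (hY : IsUnit ((α⁻¹ • G + 1)⁻¹ - Sᵀ * S).det) :
    (S * G * Sᵀ)⁻¹ = (-α⁻¹) • (1 + S * ((α⁻¹ • G + 1)⁻¹ - Sᵀ * S)⁻¹ * Sᵀ) := by
  apply Matrix.inv_eq_right_inv
  have hKC := Matrix.mul_nonsing_inv _ hK
  have hCY := Matrix.mul_nonsing_inv _ hY
  have hG : (-α⁻¹) • G = 1 - (α⁻¹ • G + 1) := by
    rw [neg_smul]; abel
  rw [Matrix.mul_smul, ← Matrix.smul_mul, ← Matrix.smul_mul, ← Matrix.mul_smul, hG]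
  generalize α⁻¹ • G + 1 = K at *
  generalize hYdef : (K⁻¹ - Sᵀ * S)⁻¹ = Y at *
  -- Expand `K (K⁻¹ - SᵀS) Y = K`.
  have hKDY : K * (Sᵀ * (S * Y)) = Y - K := by
    have h := congrArg (K * ·) hCY
    simp only [Matrix.sub_mul, Matrix.mul_sub, Matrix.mul_one, ← Matrix.mul_assoc, hKC,
      Matrix.one_mul] at h
    simp only [Matrix.mul_assoc] at h
    rw [eq_sub_iff_add_eq, ← eq_sub_iff_add_eq']
    exact h.symm
  calc S * (1 - K) * Sᵀ * (1 + S * Y * Sᵀ)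
      = S * Sᵀ - S * K * Sᵀ + (S * Sᵀ) * (S * Y * Sᵀ)
          - S * (K * (Sᵀ * (S * Y))) * Sᵀ := by
        simp only [Matrix.mul_sub, Matrix.sub_mul, Matrix.mul_add, Matrix.mul_one,
          Matrix.mul_assoc]
        abel
    _ = 1 := by
        rw [hKDY, hSS]
        simp only [Matrix.mul_sub, Matrix.sub_mul, Matrix.one_mul]
        abel

/-- With `p̄ := H̄ᵀp` and `f := −pᵀH(HᵀH)⁻¹Hᵀp`, it holds that
`α f = p̄ᵀ[diag(b) + diag(b)(C − diag(b))⁻¹ diag(b)] p̄`. -/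
theorem ls_cost_selection_identity
    {M L N : ℕ} (α : ℝ) (hα : 0 < α) (Hb : Matrix (Fin M) (Fin L) ℝ) (p : Fin M → ℝ)
    (S : Matrix (Fin N) (Fin L) ℝ)
    (hS01 : ∀ i j, S i j = 0 ∨ S i j = 1)
    (hSrow : ∀ i, ∃! j, S i j = 1)
    (hSdist : Function.Injective fun i => S i)
    (b : Fin L → ℝ) (hb : Sᵀ * S = Matrix.diagonal b)
    (hinv : IsUnit ((α⁻¹ • (Hbᵀ * Hb) + 1)⁻¹ - Matrix.diagonal b)) :
    α * (-(p ⬝ᵥ ((Hb * Sᵀ) *ᵥ (((Hb * Sᵀ)ᵀ * (Hb * Sᵀ))⁻¹ *ᵥ ((Hb * Sᵀ)ᵀ *ᵥ p))))) =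
      (Hbᵀ *ᵥ p) ⬝ᵥ ((Matrix.diagonal b +
        Matrix.diagonal b * ((α⁻¹ • (Hbᵀ * Hb) + 1)⁻¹ - Matrix.diagonal b)⁻¹ *
          Matrix.diagonal b) *ᵥ (Hbᵀ *ᵥ p)) := by
  have hSS : S * Sᵀ = 1 := selection_mul_transpose S hS01 hSrow hSdist
  have hK : IsUnit (α⁻¹ • (Hbᵀ * Hb) + 1 : Matrix (Fin L) (Fin L) ℝ).det :=
    isUnit_det_smul_gram_add_one hα Hb
  have hY := (Matrix.isUnit_iff_isUnit_det _).1 hinv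
  have hW : (Hb * Sᵀ)ᵀ * (Hb * Sᵀ) = S * (Hbᵀ * Hb) * Sᵀ := by
    simp only [Matrix.transpose_mul, Matrix.transpose_transpose, Matrix.mul_assoc]
  have hWinv := inv_compressed_gram (Hbᵀ * Hb) S hSS hK (by rwa [hb])
  rw [hb] at hWinv
  rw [hW, hWinv]
  have hmat : Matrix.diagonal b +
      Matrix.diagonal b * ((α⁻¹ • (Hbᵀ * Hb) + 1)⁻¹ - Matrix.diagonal b)⁻¹ *
        Matrix.diagonal b =
      Sᵀ * (1 + S * ((α⁻¹ • (Hbᵀ * Hb) + 1)⁻¹ - Matrix.diagonal b)⁻¹ * Sᵀ) * S := by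
    generalize ((α⁻¹ • (Hbᵀ * Hb) + 1)⁻¹ - Matrix.diagonal b)⁻¹ = Y
    rw [← hb]
    simp only [Matrix.mul_add, Matrix.add_mul, Matrix.mul_one, Matrix.mul_assoc]
  rw [hmat]
  generalize 1 + S * ((α⁻¹ • (Hbᵀ * Hb) + 1)⁻¹ - Matrix.diagonal b)⁻¹ * Sᵀ = T
  rw [Matrix.mulVec_transpose Hb p, ← Matrix.dotProduct_mulVec, ← Matrix.mulVec_transpose Hb p]
  simp only [Matrix.transpose_mul, Matrix.transpose_transpose, ← Matrix.mulVec_mulVec,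
    Matrix.smul_mulVec, Matrix.mulVec_smul, dotProduct_smul, smul_eq_mul]
  field_simp
end

section
/- Let T be a tree on the bus set {0,1,…,N} rooted at bus 0 with reduced incidence matrix A ∈ {0,±1}^{N×N} and line resistances r_ℓ > 0, and set G := Aᵀ diag(g) A with g_ℓ = 1/r_ℓ. Then G is invertible and, for all buses m, n ∈ {1,…,N}, the (m,n) entry of G⁻¹ equals the sum of the resistances r_ℓ over the lines ℓ lying on the intersection of the feeding paths of m and n (the feeding path of a bus being the unique path in the tree from bus 0 to that bus). -/
/-!
The reduced incidence matrix `A` has an explicit inverse, the signed path matrix `C` with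
`C n ℓ = ±1` when line `ℓ` lies on the feeding path of bus `n` and `0` otherwise, the sign
depending on `ℓ` alone. Indeed, of the two ends of a line, one has as its feeding path that
of the other end extended by this line (`fpath_step`); so the feeding paths of the two ends
differ in this single line, which is the identity `A * C = 1` (`A_mul_C`). Consequently
`G⁻¹ = C * diag(r) * Cᵀ`, and in the entry `∑ ℓ, C m ℓ * r ℓ * C n ℓ` the signs square to one,
leaving the sum of `r ℓ` over the lines common to both feeding paths.
-/

open Matrix BigOperators
open scoped Classical

namespace RadialGrid

variable {N : ℕ}

lemma fpath_isPath (T : RadialGrid N) (n : Fin (N + 1)) : (T.fpath n).IsPath :=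
  (T.tree.existsUnique_path 0 n).choose_spec.1

lemma eq_fpath (T : RadialGrid N) {n : Fin (N + 1)} (p : T.graph.Walk 0 n) (hp : p.IsPath) :
    p = T.fpath n :=
  (T.tree.existsUnique_path 0 n).choose_spec.2 p hp

lemma not_onPath_zero (T : RadialGrid N) (k : Fin N) : ¬ T.onPath k 0 := by
  unfold onPath
  rw [← T.eq_fpath (SimpleGraph.Walk.nil : T.graph.Walk 0 0) SimpleGraph.Walk.IsPath.nil]
  simp

lemma fpath_concat (T : RadialGrid N) {u v : Fin (N + 1)} (h : T.graph.Adj u v)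
    (hv : v ∉ (T.fpath u).support) : T.fpath v = (T.fpath u).concat h :=
  (T.eq_fpath _ ((T.fpath_isPath u).concat hv h)).symm

/-- Of two adjacent buses, one is the parent of the other. -/
lemma fpath_step (T : RadialGrid N) {u v : Fin (N + 1)} (h : T.graph.Adj u v) :
    T.fpath v = (T.fpath u).concat h ∨ T.fpath u = (T.fpath v).concat h.symm := by
  by_cases hv : v ∈ (T.fpath u).support
  · right
    apply T.fpath_concat
    rw [← T.eq_fpath _ ((T.fpath_isPath u).takeUntil hv)]
    exact SimpleGraph.Walk.endpoint_notMem_support_takeUntil (T.fpath_isPath u) hv h.ne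
  · exact Or.inl (T.fpath_concat h hv)

lemma adj_ep (T : RadialGrid N) (ℓ : Fin N) : T.graph.Adj (T.ep ℓ).1 (T.ep ℓ).2 := by
  unfold graph
  rw [SimpleGraph.fromEdgeSet_adj]
  exact ⟨⟨ℓ, rfl⟩, T.ne ℓ⟩

/-- If `v` is the child end of line `ℓ` and `u` its parent end, then `ℓ` is the one line on
the feeding path of `v` that is not on the feeding path of `u`. -/
lemma onPath_concat (T : RadialGrid N) {u v : Fin (N + 1)} (h : T.graph.Adj u v) {ℓ : Fin N}
    (hℓ : s((T.ep ℓ).1, (T.ep ℓ).2) = s(u, v)) (hc : T.fpath v = (T.fpath u).concat h) :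
    ¬ T.onPath ℓ u ∧ ∀ k, T.onPath k v ↔ T.onPath k u ∨ k = ℓ := by
  constructor
  · have hn := (T.fpath_isPath v).isTrail.edges_nodup
    rw [hc, SimpleGraph.Walk.edges_concat, List.concat_eq_append, List.nodup_append] at hn
    intro hu
    unfold onPath at hu
    rw [hℓ] at hu
    exact hn.2.2 _ hu _ (by simp) rfl
  · intro k
    unfold onPath
    rw [hc, SimpleGraph.Walk.edges_concat, List.concat_eq_append, List.mem_append,
      List.mem_singleton, ← hℓ]
    exact or_congr_right ⟨fun e => T.inj e, fun e => by rw [e]⟩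

/-- The signed path matrix: the entry at bus `n` and line `ℓ` is nonzero exactly when `ℓ` lies
on the feeding path of `n`, and is then `1` if the first endpoint of `ℓ` is its end away from
the substation and `-1` otherwise. -/
noncomputable def C (T : RadialGrid N) : Matrix (Fin N) (Fin N) ℝ := fun n ℓ =>
  (if T.onPath ℓ (T.ep ℓ).1 then 1 else -1) * (if T.onPath ℓ n.succ then 1 else 0)

/-- Row `ℓ` of `A` takes the difference across line `ℓ` of a potential vanishing at bus `0`. -/
lemma sum_A_mul (T : RadialGrid N) (f : Fin (N + 1) → ℝ) (hf : f 0 = 0) (ℓ : Fin N) :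
    ∑ i, T.A ℓ i * f i.succ = f (T.ep ℓ).1 - f (T.ep ℓ).2 := by
  have hA : ∀ i : Fin N, T.A ℓ i * f i.succ =
      (if i.succ = (T.ep ℓ).1 then f i.succ else 0) -
        (if i.succ = (T.ep ℓ).2 then f i.succ else 0) := by
    intro i
    have := T.ne ℓ
    unfold A
    split_ifs with h1 h2
    · exact absurd (h1.symm.trans h2) this
    all_goals simp
  have hs : ∀ a : Fin (N + 1), ∑ i : Fin N, (if i.succ = a then f i.succ else 0) = f a := by
    intro a
    have := Fin.sum_univ_succ (fun j : Fin (N + 1) => if j = a then f j else 0)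
    simp only [hf, ite_self, zero_add] at this
    rw [← this]
    simp
  simp only [hA, Finset.sum_sub_distrib, hs]

lemma A_mul_C (T : RadialGrid N) : T.A * T.C = 1 := by
  ext ℓ k
  rw [Matrix.mul_apply, Matrix.one_apply]
  have hs := T.sum_A_mul
    (fun n => (if T.onPath k (T.ep k).1 then 1 else -1) * (if T.onPath k n then 1 else 0))
    (by simp [T.not_onPath_zero k]) ℓ
  unfold C
  rw [hs]
  have h := T.adj_ep ℓ
  rcases T.fpath_step h with hc | hc
  · obtain ⟨h1, h2⟩ := T.onPath_concat h rfl hc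
    by_cases hk : ℓ = k
    · subst hk
      simp [h1, h2]
    · simp [h2, hk, Ne.symm hk]
  · obtain ⟨h1, h2⟩ := T.onPath_concat h.symm Sym2.eq_swap hc
    by_cases hk : ℓ = k
    · subst hk
      simp [h1, h2]
    · simp [h2, hk, Ne.symm hk]

lemma C_mul_diagonal_mul_C (T : RadialGrid N) (r : Fin N → ℝ) (m n : Fin N) :
    (T.C * Matrix.diagonal r * T.Cᵀ) m n = T.R r m n := by
  rw [Matrix.mul_apply]
  unfold R Rbus
  refine Finset.sum_congr rfl fun ℓ _ => ?_
  rw [Matrix.mul_diagonal, Matrix.transpose_apply]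
  unfold C
  by_cases h1 : T.onPath ℓ m.succ <;> by_cases h2 : T.onPath ℓ n.succ <;>
    by_cases h3 : T.onPath ℓ (T.ep ℓ).1 <;> simp [h1, h2, h3]

end RadialGrid

/-- `G = Aᵀ diag(g) A` with `g_ℓ = 1/r_ℓ` is invertible and
`(G⁻¹)_{mn}` equals the sum of the resistances on the intersection of the feeding
paths of `m` and `n`. -/
theorem Ginv_eq_R
    {N : ℕ} (hN : 1 ≤ N) (Γ : RadialGrid N) (r : Fin N → ℝ) (hr : ∀ ℓ, 0 < r ℓ) :
    IsUnit (Γ.Gmat fun ℓ => (r ℓ)⁻¹) ∧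
    ∀ m n : Fin N, (Γ.Gmat fun ℓ => (r ℓ)⁻¹)⁻¹ m n = Γ.R r m n := by
  have hD : Matrix.diagonal (fun ℓ => (r ℓ)⁻¹) * Matrix.diagonal r = 1 := by
    rw [Matrix.diagonal_mul_diagonal, ← Matrix.diagonal_one]
    congr 1
    funext ℓ
    exact inv_mul_cancel₀ (hr ℓ).ne'
  have hT : Γ.Aᵀ * Γ.Cᵀ = 1 := by
    rw [← Matrix.transpose_mul, mul_eq_one_comm.mp Γ.A_mul_C, Matrix.transpose_one]
  have hG : (Γ.Gmat fun ℓ => (r ℓ)⁻¹) * (Γ.C * Matrix.diagonal r * Γ.Cᵀ) = 1 := by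
    unfold RadialGrid.Gmat
    calc _ = Γ.Aᵀ * (Matrix.diagonal (fun ℓ => (r ℓ)⁻¹) * (Γ.A * Γ.C) * Matrix.diagonal r)
          * Γ.Cᵀ := by simp only [Matrix.mul_assoc]
      _ = 1 := by rw [Γ.A_mul_C, Matrix.mul_one, hD, Matrix.mul_one, hT]
  refine ⟨IsUnit.of_mul_eq_one _ hG, fun m n => ?_⟩
  rw [Matrix.inv_eq_right_inv hG, Γ.C_mul_diagonal_mul_C]
end
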